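/- arXiv:2411.19622 — 2 statements merged into one kernel-verified Lean document; each statement's English description precedes it below -/
import Mathlib

section
/- For all complex numbers α and β, the squared overlap of the coherent states c(α) and c(β) satisfies |⟨c(α), c(β)⟩|² = exp(−|α − β|²). -/
/-!
Complex conjugation takes the amplitudes of `c(α)` to those of `c(conj α)`, so the overlap reduces
to the bilinear pairing `∑ c(α)ₙ c(β)ₙ`. There the two factors `√n!` combine to `n!`, leaving a
normalized exponential series. The modulus of an exponential sees only the real part of its
exponent, which here is `-‖α - β‖² / 2` by expanding the square.
-/

/-- The coherent state amplitude: `n`-th entry of the coherent state `c(α)`,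
namely `e^{-|α|²/2} αⁿ / √(n!)`. -/
noncomputable def coherentAmp (α : ℂ) (n : ℕ) : ℂ :=
  Complex.exp (-((‖α‖ : ℂ) ^ 2 / 2)) * α ^ n / (Real.sqrt (Nat.factorial n) : ℂ)

open scoped ComplexConjugate

lemma conj_coherentAmp (α : ℂ) (n : ℕ) : conj (coherentAmp α n) = coherentAmp (conj α) n := by
  simp [coherentAmp, ← Complex.exp_conj, Complex.conj_ofNat]

lemma coherentAmp_mul_coherentAmp (α β : ℂ) (n : ℕ) :
    coherentAmp α n * coherentAmp β n =
      Complex.exp (-((‖α‖ ^ 2 + ‖β‖ ^ 2) / 2 : ℝ)) * ((α * β) ^ n / n.factorial) := by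
  have sqrt_mul_self : (√n.factorial : ℂ) * √n.factorial = n.factorial := by
    rw [← Complex.ofReal_mul, Real.mul_self_sqrt (Nat.cast_nonneg _), Complex.ofReal_natCast]
  have exp_eq : Complex.exp (-((‖α‖ ^ 2 + ‖β‖ ^ 2) / 2 : ℝ)) =
      Complex.exp (-((‖α‖ : ℂ) ^ 2 / 2)) * Complex.exp (-((‖β‖ : ℂ) ^ 2 / 2)) := by
    rw [← Complex.exp_add]
    push_cast
    ring_nf
  rw [coherentAmp, coherentAmp, div_mul_div_comm, sqrt_mul_self, exp_eq, mul_pow]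
  ring

lemma hasSum_coherentAmp_mul_coherentAmp (α β : ℂ) :
    HasSum (fun n ↦ coherentAmp α n * coherentAmp β n)
      (Complex.exp (α * β - ((‖α‖ ^ 2 + ‖β‖ ^ 2) / 2 : ℝ))) := by
  have hasSum_exp : HasSum (fun n : ℕ ↦ (α * β) ^ n / n.factorial) (Complex.exp (α * β)) :=
    Complex.exp_eq_exp_ℂ ▸ NormedSpace.expSeries_div_hasSum_exp (α * β)
  rw [sub_eq_neg_add, Complex.exp_add]
  simpa only [coherentAmp_mul_coherentAmp] using hasSum_exp.mul_left _

lemma hasSum_conj_coherentAmp_mul_coherentAmp (α β : ℂ) :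
    HasSum (fun n ↦ conj (coherentAmp α n) * coherentAmp β n)
      (Complex.exp (conj α * β - ((‖α‖ ^ 2 + ‖β‖ ^ 2) / 2 : ℝ))) := by
  simpa only [conj_coherentAmp, Complex.norm_conj] using
    hasSum_coherentAmp_mul_coherentAmp (conj α) β

lemma norm_exp_inner_sub_sq {E : Type*} [SeminormedAddCommGroup E] [InnerProductSpace ℂ E]
    (x y : E) :
    ‖Complex.exp (inner ℂ x y - ((‖x‖ ^ 2 + ‖y‖ ^ 2) / 2 : ℝ))‖ ^ 2 =
      Real.exp (-‖x - y‖ ^ 2) := by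
  have two_mul_re_exponent :
      2 * ((inner ℂ x y).re - (‖x‖ ^ 2 + ‖y‖ ^ 2) / 2) = -‖x - y‖ ^ 2 := by
    rw [norm_sub_sq (𝕜 := ℂ), RCLike.re_eq_complex_re]
    ring
  rw [Complex.norm_exp, ← Real.exp_nat_mul, Complex.sub_re, Complex.ofReal_re, Nat.cast_two,
    two_mul_re_exponent]

/-- the squared overlap of the coherent states `c(α)` and `c(β)` is
`|⟨c(α), c(β)⟩|² = exp(−|α − β|²)`. -/
theorem coherent_state_overlap (α β : ℂ) :
    ‖∑' n : ℕ, (starRingEnd ℂ) (coherentAmp α n) * coherentAmp β n‖ ^ 2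
      = Real.exp (-‖α - β‖ ^ 2) := by
  rw [(hasSum_conj_coherentAmp_mul_coherentAmp α β).tsum_eq, ← RCLike.inner_apply',
    norm_exp_inner_sub_sq]
end

section
/- Let μ > 0 and σ > 0 be reals. For each n ∈ ℕ, consider n i.i.d. real observations, distributed either all according to N(0, σ²) (hypothesis 0) or all according to N(μ, σ²) (hypothesis 1), and the threshold test that declares hypothesis 1 if and only if Σ_{i=1}^n X_i > nμ/2. Let a_n := ℙ_{N(0,σ²)^{⊗n}}(Σ_i X_i > nμ/2) and b_n := ℙ_{N(μ,σ²)^{⊗n}}(Σ_i X_i ≤ nμ/2) be its two error probabilities. Then lim_{n→∞} −(1/n) ln( ½(a_n + b_n) ) = μ²/(8σ²). -/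
/-!
Both error probabilities equal `Q (√n · μ / (2σ))`, where `Q` is the upper tail of the standard
normal law: the sum of the observations is Gaussian, and the threshold `nμ/2` lies halfway between
its two possible means `0` and `nμ`. Since `log Q x ~ -x² / 2` as `x → ∞`, the exponent is
`(μ / (2σ))² / 2 = μ² / (8σ²)`. The upper bound on `Q` is the Chernoff bound; the lower bound keeps
only the mass of `(x, x + 1]`, on which the density is at least its value at `x + 1`.
-/

section GaussianTail

open MeasureTheory ProbabilityTheory Filter Set
open scoped NNReal Topology

/-- The upper tail `Q x = ℙ(Z > x)` of a standard normal variable `Z`. -/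
noncomputable def gaussianTail (x : ℝ) : ℝ := (gaussianReal 0 1).real (Ioi x)

theorem gaussianTail_le_exp {x : ℝ} (hx : 0 ≤ x) : gaussianTail x ≤ Real.exp (-x ^ 2 / 2) :=
  calc gaussianTail x ≤ (gaussianReal 0 1).real {y | x ≤ id y} :=
        measureReal_mono fun _ hy => (mem_Ioi.mp hy).le
    _ ≤ Real.exp (-x * x) * mgf id (gaussianReal 0 1) x :=
        measure_ge_le_exp_mul_mgf x hx (integrable_exp_mul_gaussianReal x)
    _ = Real.exp (-x ^ 2 / 2) := by
        rw [mgf_id_gaussianReal, ← Real.exp_add]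
        congr 1
        push_cast
        ring

theorem gaussianPDFReal_le_gaussianTail {x : ℝ} (hx : 0 ≤ x) :
    gaussianPDFReal 0 1 (x + 1) ≤ gaussianTail x := by
  have pdf_ge : ∀ y ∈ Ioc x (x + 1), gaussianPDFReal 0 1 (x + 1) ≤ gaussianPDFReal 0 1 y := by
    intro y hy
    have hy_nonneg : 0 ≤ y := hx.trans hy.1.le
    simp only [gaussianPDFReal_def, sub_zero]
    gcongr
    exact hy.2
  calc gaussianPDFReal 0 1 (x + 1)
      = ∫ _ in Ioc x (x + 1), gaussianPDFReal 0 1 (x + 1) := by simp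
    _ ≤ ∫ y in Ioc x (x + 1), gaussianPDFReal 0 1 y :=
        setIntegral_mono_on (integrableOn_const (by simp))
          (integrable_gaussianPDFReal 0 1).integrableOn measurableSet_Ioc pdf_ge
    _ = (gaussianReal 0 1).real (Ioc x (x + 1)) := by
        rw [measureReal_def, gaussianReal_apply_eq_integral 0 one_ne_zero,
          ENNReal.toReal_ofReal (integral_nonneg (gaussianPDFReal_nonneg 0 1))]
    _ ≤ gaussianTail x := measureReal_mono Ioc_subset_Ioi_self

theorem log_gaussianPDFReal_zero_one (x : ℝ) :
    Real.log (gaussianPDFReal 0 1 x) = -Real.log √(2 * Real.pi) - x ^ 2 / 2 := by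
  rw [gaussianPDFReal_def, Real.log_mul (by positivity) (Real.exp_ne_zero _), Real.log_inv,
    Real.log_exp]
  simp only [NNReal.coe_one, mul_one, sub_zero]
  ring

theorem tendsto_log_gaussianTail_div_sq :
    Tendsto (fun x => Real.log (gaussianTail x) / x ^ 2) atTop (𝓝 (-(1 / 2))) := by
  have lower_tendsto : Tendsto
      (fun x : ℝ => -Real.log √(2 * Real.pi) * x⁻¹ ^ 2 - (1 + x⁻¹) ^ 2 / 2)
      atTop (𝓝 (-(1 / 2))) := by
    have h : Tendsto (fun x : ℝ => x⁻¹) atTop (𝓝 0) := tendsto_inv_atTop_zero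
    convert ((h.pow 2).const_mul _).sub (((h.const_add 1).pow 2).div_const 2) using 2
    norm_num
  refine tendsto_of_tendsto_of_tendsto_of_le_of_le' lower_tendsto tendsto_const_nhds ?_ ?_ <;>
    filter_upwards [eventually_gt_atTop 0] with x hx
  · have log_ge := Real.log_le_log (gaussianPDFReal_pos 0 1 (x + 1) one_ne_zero)
      (gaussianPDFReal_le_gaussianTail hx.le)
    rw [log_gaussianPDFReal_zero_one] at log_ge
    rw [le_div_iff₀ (by positivity)]
    refine le_of_eq_of_le ?_ log_ge
    field_simp
  · have tail_pos : 0 < gaussianTail x :=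
      (gaussianPDFReal_pos 0 1 (x + 1) one_ne_zero).trans_le (gaussianPDFReal_le_gaussianTail hx.le)
    have log_le := Real.log_le_log tail_pos (gaussianTail_le_exp hx.le)
    rw [Real.log_exp] at log_le
    rw [div_le_iff₀ (by positivity)]
    linarith

theorem tendsto_neg_inv_mul_log_gaussianTail_sqrt_mul {c : ℝ} (hc : 0 < c) :
    Tendsto (fun n : ℕ => -(1 / (n : ℝ)) * Real.log (gaussianTail (√n * c))) atTop
      (𝓝 (c ^ 2 / 2)) := by
  have sqrt_mul_atTop : Tendsto (fun n : ℕ => √(n : ℝ) * c) atTop atTop :=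
    (Real.tendsto_sqrt_atTop.comp tendsto_natCast_atTop_atTop).atTop_mul_const hc
  convert (tendsto_log_gaussianTail_div_sq.comp sqrt_mul_atTop).const_mul (-c ^ 2) using 2 with n
  · simp only [Function.comp_apply, mul_pow, Real.sq_sqrt n.cast_nonneg]
    field_simp
  · ring

theorem gaussianReal_zero_one_map_affine (m : ℝ) (v : ℝ≥0) :
    (gaussianReal 0 1).map (fun x => m + √v * x) = gaussianReal m v := by
  have sq_sqrt_v : NNReal.mk (√v ^ 2) (sq_nonneg _) = v := NNReal.eq (Real.sq_sqrt v.coe_nonneg)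
  calc (gaussianReal 0 1).map (fun x => m + √v * x)
      = ((gaussianReal 0 1).map (√v * ·)).map (m + ·) :=
        (Measure.map_map (measurable_const_add m) (measurable_const_mul _)).symm
    _ = gaussianReal m v := by
        rw [gaussianReal_map_const_mul, gaussianReal_map_const_add, sq_sqrt_v, mul_zero, zero_add,
          mul_one]

theorem gaussianReal_real_Ioi (m : ℝ) {v : ℝ≥0} (hv : v ≠ 0) (c : ℝ) :
    (gaussianReal m v).real (Ioi c) = gaussianTail ((c - m) / √v) := by
  have sqrt_pos : 0 < √(v : ℝ) := by positivity
  have preimage : (fun x => m + √v * x) ⁻¹' Ioi c = Ioi ((c - m) / √v) := by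
    ext x
    simp [div_lt_iff₀' sqrt_pos, sub_lt_iff_lt_add']
  rw [gaussianTail, ← preimage, ← map_measureReal_apply (by fun_prop) measurableSet_Ioi,
    gaussianReal_zero_one_map_affine]

theorem gaussianReal_real_Iic (m : ℝ) {v : ℝ≥0} (hv : v ≠ 0) (c : ℝ) :
    (gaussianReal m v).real (Iic c) = gaussianTail ((m - c) / √v) := by
  have := nullSingletonClass_gaussianReal (μ := -m) hv
  calc (gaussianReal m v).real (Iic c) = (gaussianReal (-m) v).real (Ici (-c)) := by
        rw [← gaussianReal_map_neg, map_measureReal_apply measurable_neg measurableSet_Ici]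
        simp
    _ = (gaussianReal (-m) v).real (Ioi (-c)) := measureReal_congr Ioi_ae_eq_Ici.symm
    _ = gaussianTail ((m - c) / √v) := by
        rw [gaussianReal_real_Ioi (-m) hv, neg_sub_neg]

end GaussianTail

section SumOfGaussians

open MeasureTheory ProbabilityTheory Set
open scoped NNReal

variable {ι : Type*} [Fintype ι] (m : ι → ℝ) (v : ι → ℝ≥0)

theorem pi_gaussianReal_map_sum :
    (Measure.pi fun i => gaussianReal (m i) (v i)).map (fun x => ∑ i, x i)
      = gaussianReal (∑ i, m i) (∑ i, v i) := by
  have : IsProbabilityMeasure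
      ((Measure.pi fun i => gaussianReal (m i) (v i)).map fun x => ∑ i, x i) :=
    Measure.isProbabilityMeasure_map (by fun_prop)
  refine Measure.ext_of_charFun ?_
  ext t
  simp only [charFun_map_sum_pi_eq_prod, Finset.prod_apply, charFun_gaussianReal,
    ← Complex.exp_sum, Finset.sum_sub_distrib, ← Finset.sum_mul, ← Finset.mul_sum,
    ← Finset.sum_div, Complex.ofReal_sum, NNReal.coe_sum]

variable {v}

theorem pi_gaussianReal_real_lt_sum (hv : ∑ i, v i ≠ 0) (c : ℝ) :
    (Measure.pi fun i => gaussianReal (m i) (v i)).real {x | c < ∑ i, x i}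
      = gaussianTail ((c - ∑ i, m i) / √(∑ i, v i)) := by
  rw [← NNReal.coe_sum, ← gaussianReal_real_Ioi _ hv, ← pi_gaussianReal_map_sum,
    map_measureReal_apply (by fun_prop) measurableSet_Ioi]
  rfl

theorem pi_gaussianReal_real_sum_le (hv : ∑ i, v i ≠ 0) (c : ℝ) :
    (Measure.pi fun i => gaussianReal (m i) (v i)).real {x | ∑ i, x i ≤ c}
      = gaussianTail ((∑ i, m i - c) / √(∑ i, v i)) := by
  rw [← NNReal.coe_sum, ← gaussianReal_real_Iic _ hv, ← pi_gaussianReal_map_sum,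
    map_measureReal_apply (by fun_prop) measurableSet_Iic]
  rfl

theorem threshold_test_average_error (μ : ℝ) {w : ℝ≥0} (hw : w ≠ 0) {n : ℕ} (hn : n ≠ 0) :
    (1 / 2) *
        ((Measure.pi fun _ : Fin n => gaussianReal 0 w).real {x | n * μ / 2 < ∑ i, x i}
          + (Measure.pi fun _ : Fin n => gaussianReal μ w).real {x | ∑ i, x i ≤ n * μ / 2})
      = gaussianTail (√n * (μ / (2 * √w))) := by
  have sum_ne_zero : ∑ _ : Fin n, w ≠ 0 := by simp [hn, hw]
  have standardize : n * μ / 2 / √(n * w) = √n * (μ / (2 * √w)) := by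
    rw [Real.sqrt_mul n.cast_nonneg]
    field_simp
    rw [Real.sq_sqrt n.cast_nonneg, mul_comm]
  have midpoint : n * μ - n * μ / 2 = n * μ / 2 := by ring
  rw [pi_gaussianReal_real_lt_sum _ sum_ne_zero, pi_gaussianReal_real_sum_le _ sum_ne_zero]
  simp only [Finset.sum_const, Finset.card_univ, Fintype.card_fin, nsmul_eq_mul, mul_zero,
    sub_zero, midpoint, standardize]
  ring

end SumOfGaussians

open MeasureTheory ProbabilityTheory Filter in
/-- for `μ, σ > 0`, the threshold test on `n` i.i.d. Gaussian observations
(`N(0,σ²)` under hypothesis 0, `N(μ,σ²)` under hypothesis 1) that declares hypothesis 1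
iff `Σᵢ Xᵢ > nμ/2` has error probabilities `a_n, b_n` whose equal-prior average satisfies
`lim_{n→∞} −(1/n) ln(½(a_n + b_n)) = μ²/(8σ²)`. -/
theorem threshold_test_chernoff_exponent (μ σ : ℝ) (hμ : 0 < μ) (hσ : 0 < σ) :
    Tendsto (fun n : ℕ =>
        -(1 / (n : ℝ)) * Real.log ((1 / 2) *
          (((Measure.pi fun _ : Fin n => gaussianReal 0 ⟨σ ^ 2, sq_nonneg σ⟩)
              {x | (n : ℝ) * μ / 2 < ∑ i, x i}).toReal
            + ((Measure.pi fun _ : Fin n => gaussianReal μ ⟨σ ^ 2, sq_nonneg σ⟩)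
              {x | ∑ i, x i ≤ (n : ℝ) * μ / 2}).toReal)))
      atTop (nhds (μ ^ 2 / (8 * σ ^ 2))) := by
  set v : NNReal := ⟨σ ^ 2, sq_nonneg σ⟩
  have v_ne_zero : v ≠ 0 := NNReal.coe_ne_zero.mp (pow_pos hσ 2).ne'
  have sqrt_v : √(v : ℝ) = σ := Real.sqrt_sq hσ.le
  have exponent : (μ / (2 * σ)) ^ 2 / 2 = μ ^ 2 / (8 * σ ^ 2) := by ring
  rw [← exponent]
  have tail_tendsto := tendsto_neg_inv_mul_log_gaussianTail_sqrt_mul (c := μ / (2 * σ))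
    (by positivity)
  refine tail_tendsto.congr' ?_
  filter_upwards [eventually_ne_atTop 0] with n hn
  simp only [← measureReal_def]
  rw [threshold_test_average_error μ v_ne_zero hn, sqrt_v]
end
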